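/- arXiv:2406.01766 — 3 statements merged into one kernel-verified Lean document; each statement's English description precedes it below -/
import Mathlib

section
/- Let α, β ∈ ℝ² (or ℝ^d) be unit vectors with angle φ = ∠(α,β) ∈ [0, π/2] and αᵀβ ≥ 0. Then for x ∼ N(0, I), E[|αᵀx| · 1{sign(αᵀx) ≠ sign(βᵀx)}] = O(φ²), i.e., there is a universal constant C with E[|αᵀx| · 1{sign(αᵀx) ≠ sign(βᵀx)}] ≤ C φ². -/
open MeasureTheory ProbabilityTheory Real
open scoped BigOperators Classical

/-- standard Gaussian measure `N(0, I_d)` on `ℝ^d` -/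
noncomputable def stdG (d : ℕ) : Measure (Fin d → ℝ) :=
  Measure.pi fun _ => gaussianReal 0 1

/-- The covariance of two linear functionals of a standard Gaussian vector is the dot product of
their coefficient vectors. -/
lemma covariance_stdG {d : ℕ} (a b : Fin d → ℝ) :
    cov[fun x ↦ ∑ j, a j * x j, fun x ↦ ∑ j, b j * x j; stdG d] = ∑ j, a j * b j := by
  have hmem (i : Fin d) : MemLp (fun x : Fin d → ℝ ↦ x i) 2 (stdG d) :=
    (memLp_id_gaussianReal' 2 (by simp)).comp_measurePreserving
      (measurePreserving_eval (fun _ ↦ gaussianReal 0 1) i)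
  have hind : iIndepFun (fun i (x : Fin d → ℝ) ↦ x i) (stdG d) :=
    iIndepFun_pi (X := fun _ ↦ id) fun _ ↦ aemeasurable_id
  have : IsProbabilityMeasure (stdG d) := by unfold stdG; infer_instance
  have hcov (i j : Fin d) :
      cov[fun x : Fin d → ℝ ↦ x i, fun x ↦ x j; stdG d] = if i = j then 1 else 0 := by
    split_ifs with hij
    · subst hij
      rw [covariance_self (hmem i).aemeasurable]
      have h := variance_map (μ := stdG d) (X := id) (Y := fun x ↦ x i)
        aemeasurable_id (hmem i).aemeasurable
      rw [stdG, (measurePreserving_eval (fun _ ↦ gaussianReal 0 1) i).map_eq,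
        variance_id_gaussianReal] at h
      exact h.symm
    · exact (hind.indepFun hij).covariance_eq_zero (hmem i) (hmem j)
  rw [covariance_fun_sum_fun_sum (fun i ↦ (hmem i).const_mul _) (fun i ↦ (hmem i).const_mul _)]
  simp [covariance_const_mul_left, covariance_const_mul_right, hcov, mul_comm]

/-- Two linear functionals of a standard Gaussian vector are jointly Gaussian. -/
lemma hasGaussianLaw_stdG {d : ℕ} (a b : Fin d → ℝ) :
    HasGaussianLaw (fun x ↦ (∑ j, a j * x j, ∑ j, b j * x j)) (stdG d) := by
  have hind : iIndepFun (fun i (x : Fin d → ℝ) ↦ x i) (stdG d) :=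
    iIndepFun_pi (X := fun _ ↦ id) fun _ ↦ aemeasurable_id
  have hev (i : Fin d) : HasGaussianLaw (fun x : Fin d → ℝ ↦ x i) (stdG d) :=
    HasLaw.hasGaussianLaw (μ := gaussianReal 0 1)
      ⟨(measurable_pi_apply i).aemeasurable,
        (measurePreserving_eval (fun _ ↦ gaussianReal 0 1) i).map_eq⟩
  let L (c : Fin d → ℝ) : (Fin d → ℝ) →L[ℝ] ℝ :=
    ∑ j, c j • ContinuousLinearMap.proj (R := ℝ) (φ := fun _ : Fin d ↦ ℝ) j
  have hL : (fun x : Fin d → ℝ ↦ (∑ j, a j * x j, ∑ j, b j * x j)) =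
      (L a).prod (L b) ∘ fun (x : Fin d → ℝ) j ↦ x j := by
    ext x <;> simp [L]
  rw [hL]
  exact (hind.hasGaussianLaw hev).map ((L a).prod (L b))

lemma integral_stdG {d : ℕ} (a : Fin d → ℝ) : ∫ x, ∑ j, a j * x j ∂(stdG d) = 0 := by
  rw [integral_finsetSum]
  · simp [integral_const_mul, stdG, integral_eval (μ := fun _ : Fin d ↦ gaussianReal 0 1)]
  · intro i _
    exact (integrable_eval (μ := fun _ : Fin d ↦ gaussianReal 0 1)
      (IsGaussian.integrable_id)).const_mul _

/-- Orthogonal linear functionals of a standard Gaussian vector are independent centred Gaussians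
with variances the squared lengths of their coefficient vectors. -/
lemma map_stdG_of_orthogonal {d : ℕ} (a b : Fin d → ℝ) (hab : ∑ j, a j * b j = 0) :
    (stdG d).map (fun x ↦ (∑ j, a j * x j, ∑ j, b j * x j)) =
      (gaussianReal 0 (∑ j, a j ^ 2).toNNReal).prod (gaussianReal 0 (∑ j, b j ^ 2).toNNReal) := by
  have hG := hasGaussianLaw_stdG a b
  have : IsProbabilityMeasure (stdG d) := by unfold stdG; infer_instance
  have hI := hG.indepFun_of_covariance_eq_zero ((covariance_stdG a b).trans hab)
  have hlaw (c : Fin d → ℝ) :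
      (stdG d).map (fun x ↦ ∑ j, c j * x j) = gaussianReal 0 (∑ j, c j ^ 2).toNNReal := by
    rw [(hasGaussianLaw_stdG c c).fst.map_eq_gaussianReal, integral_stdG,
      ← covariance_self (hasGaussianLaw_stdG c c).fst.aemeasurable, covariance_stdG]
    simp [pow_two]
  rw [(indepFun_iff_map_prod_eq_prod_map_map hG.fst.aemeasurable hG.snd.aemeasurable).1 hI,
    hlaw, hlaw]

/-- The standard Gaussian measure of `[-r, r]` is at most `r`. -/
lemma gaussianReal_real_Icc_le {r : ℝ} (hr : 0 ≤ r) :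
    (gaussianReal 0 1).real (Set.Icc (-r) r) ≤ r := by
  have hpdf (x : ℝ) : gaussianPDFReal 0 1 x ≤ 1 / 2 := by
    rw [gaussianPDFReal]
    have hs : (2 : ℝ) ≤ √(2 * π * ((1 : NNReal) : ℝ)) := by
      apply Real.le_sqrt_of_sq_le
      have := Real.pi_gt_three
      norm_num
      linarith
    calc _ ≤ (2 : ℝ)⁻¹ * 1 := by
          gcongr
          rw [Real.exp_le_one_iff]
          exact div_nonpos_of_nonpos_of_nonneg (neg_nonpos.2 (sq_nonneg _)) (by positivity)
      _ = 1 / 2 := by norm_num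
  rw [measureReal_def, gaussianReal_apply_eq_integral 0 one_ne_zero,
    ENNReal.toReal_ofReal (integral_nonneg fun x ↦ gaussianPDFReal_nonneg _ _ _)]
  calc ∫ x in Set.Icc (-r) r, gaussianPDFReal 0 1 x
      ≤ ∫ _ in Set.Icc (-r) r, (1 / 2 : ℝ) :=
        setIntegral_mono (integrable_gaussianPDFReal 0 1).integrableOn (by simp) hpdf
    _ = r := by
        rw [setIntegral_const, Real.volume_real_Icc_of_le (by linarith), smul_eq_mul]
        ring

/-- The first absolute moment of a standard Gaussian truncated at level `r` is at most `r ^ 2`. -/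
lemma integral_indicator_abs_gaussianReal_le {r : ℝ} (hr : 0 ≤ r) :
    ∫ u, (if |u| ≤ r then |u| else 0) ∂(gaussianReal 0 1) ≤ r ^ 2 := by
  calc ∫ u, (if |u| ≤ r then |u| else 0) ∂(gaussianReal 0 1)
      ≤ ∫ u, (Set.Icc (-r) r).indicator (fun _ ↦ r) u ∂(gaussianReal 0 1) := by
        refine integral_mono_of_nonneg (ae_of_all _ fun u ↦ ?_)
          ((integrable_const r).indicator measurableSet_Icc) (ae_of_all _ fun u ↦ ?_)
        · dsimp only
          split_ifs <;> simp
        · simp only [Set.indicator, Set.mem_Icc, ← abs_le]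
          split_ifs with h
          exacts [h, le_rfl]
    _ = (gaussianReal 0 1).real (Set.Icc (-r) r) * r := by
        rw [integral_indicator_const _ measurableSet_Icc, smul_eq_mul]
    _ ≤ r * r := by gcongr; exact gaussianReal_real_Icc_le hr
    _ = r ^ 2 := by ring

lemma integral_sq_gaussianReal (v : NNReal) : ∫ w, w ^ 2 ∂(gaussianReal 0 v) = v := by
  have h := variance_eq_sub (memLp_id_gaussianReal' (μ := 0) (v := v) 2 (by simp))
  rw [variance_id_gaussianReal] at h
  simpa using h.symm

lemma integral_abs_gaussianReal_le : ∫ u, |u| ∂(gaussianReal 0 1) ≤ 1 := by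
  have hsq : Integrable (fun u : ℝ ↦ u ^ 2) (gaussianReal 0 1) :=
    (memLp_id_gaussianReal' 2 (by simp)).integrable_sq
  calc ∫ u, |u| ∂(gaussianReal 0 1) ≤ ∫ u, (1 + u ^ 2) / 2 ∂(gaussianReal 0 1) := by
        refine integral_mono_of_nonneg (ae_of_all _ fun u ↦ abs_nonneg u)
          (((integrable_const 1).add hsq).div_const 2) (ae_of_all _ fun u ↦ ?_)
        have := sq_nonneg (|u| - 1)
        dsimp only
        nlinarith [sq_abs u]
    _ = 1 := by
        rw [integral_div, integral_add (integrable_const 1) hsq, integral_sq_gaussianReal]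
        norm_num

lemma integrable_wedge (v : NNReal) :
    Integrable (fun p : ℝ × ℝ ↦ if |p.1| ≤ 2 * |p.2| then |p.1| else 0)
      ((gaussianReal 0 1).prod (gaussianReal 0 v)) := by
  have hfst : Integrable (fun p : ℝ × ℝ ↦ p.1) ((gaussianReal 0 1).prod (gaussianReal 0 v)) :=
    (IsGaussian.integrable_id (μ := gaussianReal 0 1)).comp_fst _
  refine hfst.mono (Measurable.aestronglyMeasurable ?_) (ae_of_all _ fun p ↦ ?_)
  · exact Measurable.ite (measurableSet_le (by fun_prop) (by fun_prop)) (by fun_prop) (by fun_prop)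
  · split_ifs <;> simp

/-- The first absolute moment of a standard Gaussian over the wedge `|u| ≤ 2 |w|`, where `w` is an
independent centred Gaussian of variance `v`, is at most `4 v`. -/
lemma integral_wedge_le (v : NNReal) :
    ∫ p : ℝ × ℝ, (if |p.1| ≤ 2 * |p.2| then |p.1| else 0)
      ∂((gaussianReal 0 1).prod (gaussianReal 0 v)) ≤ 4 * v := by
  have hsq : Integrable (fun u : ℝ ↦ u ^ 2) (gaussianReal 0 v) :=
    (memLp_id_gaussianReal' 2 (by simp)).integrable_sq
  rw [integral_prod_symm _ (integrable_wedge v), ← integral_sq_gaussianReal v,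
    ← integral_const_mul]
  refine integral_mono_of_nonneg (ae_of_all _ fun w ↦ integral_nonneg fun u ↦ ?_)
    (hsq.const_mul 4) (ae_of_all _ fun w ↦ ?_)
  · dsimp only
    split_ifs <;> simp
  · refine (integral_indicator_abs_gaussianReal_le (r := 2 * |w|) (by positivity)).trans_eq ?_
    rw [mul_pow, sq_abs]
    norm_num

/-- If `u` and `c * u + w` have different signs and `c ≥ 1 / 2`, then `u` is controlled by `w`. -/
lemma abs_le_of_sign_ne {c u w : ℝ} (hc : 1 / 2 ≤ c) (hu : u ≠ 0)
    (h : Real.sign u ≠ Real.sign (c * u + w)) : |u| ≤ 2 * |w| := by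
  by_contra! hlt
  rcases hu.lt_or_gt with hu | hu
  · rw [abs_of_neg hu] at hlt
    have := le_abs_self w
    rw [Real.sign_of_neg hu, Real.sign_of_neg (by nlinarith)] at h
    exact h rfl
  · rw [abs_of_pos hu] at hlt
    have := neg_abs_le w
    rw [Real.sign_of_pos hu, Real.sign_of_pos (by nlinarith)] at h
    exact h rfl

theorem stmt9 : ∃ C : ℝ, 0 < C ∧ ∀ (d : ℕ) (α β : Fin d → ℝ),
    (∑ j, α j ^ 2) = 1 → (∑ j, β j ^ 2) = 1 → 0 ≤ ∑ j, α j * β j →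
    (∫ x, (if Real.sign (∑ j, α j * x j) ≠ Real.sign (∑ j, β j * x j)
            then |∑ j, α j * x j| else 0) ∂(stdG d))
      ≤ C * (Real.arccos (∑ j, α j * β j)) ^ 2 := by
  refine ⟨4, by norm_num, fun d α β hα hβ _ ↦ ?_⟩
  obtain ⟨c, hc⟩ : ∃ c, c = ∑ j, α j * β j := ⟨_, rfl⟩
  rw [← hc]
  let γ : Fin d → ℝ := fun j ↦ β j - c * α j
  have hαγ : ∑ j, α j * γ j = 0 := by
    calc ∑ j, α j * γ j = ∑ j, α j * β j - c * ∑ j, α j ^ 2 := by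
          rw [Finset.mul_sum, ← Finset.sum_sub_distrib]
          exact Finset.sum_congr rfl fun j _ ↦ by simp only [γ]; ring
      _ = 0 := by rw [hα, ← hc]; ring
  have hγ : ∑ j, γ j ^ 2 = 1 - c ^ 2 := by
    calc ∑ j, γ j ^ 2 = ∑ j, β j ^ 2 - 2 * c * ∑ j, α j * β j + c ^ 2 * ∑ j, α j ^ 2 := by
          rw [Finset.mul_sum, Finset.mul_sum, ← Finset.sum_sub_distrib, ← Finset.sum_add_distrib]
          exact Finset.sum_congr rfl fun j _ ↦ by simp only [γ]; ring
      _ = 1 - c ^ 2 := by rw [hα, hβ, ← hc]; ring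
  have hc1 : c ^ 2 ≤ 1 := by
    have : 0 ≤ ∑ j, γ j ^ 2 := Finset.sum_nonneg fun j _ ↦ sq_nonneg _
    linarith
  have hβγ (x : Fin d → ℝ) : ∑ j, β j * x j = c * ∑ j, α j * x j + ∑ j, γ j * x j := by
    rw [Finset.mul_sum, ← Finset.sum_add_distrib]
    exact Finset.sum_congr rfl fun j _ ↦ by simp only [γ]; ring
  have hmap := map_stdG_of_orthogonal α γ hαγ
  rw [hα, hγ, Real.toNNReal_one] at hmap
  have hT : Measurable fun x : Fin d → ℝ ↦ (∑ j, α j * x j, ∑ j, γ j * x j) := by fun_prop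
  have hnonneg (x : Fin d → ℝ) : 0 ≤ if Real.sign (∑ j, α j * x j) ≠ Real.sign (∑ j, β j * x j)
      then |∑ j, α j * x j| else 0 := by
    split_ifs <;> simp
  rcases le_or_gt (1 / 2) c with hc2 | hc2
  · have hw := integrable_wedge (1 - c ^ 2).toNNReal
    have hle := integral_wedge_le (1 - c ^ 2).toNNReal
    rw [← hmap] at hw hle
    rw [integral_map hT.aemeasurable hw.aestronglyMeasurable,
      Real.coe_toNNReal _ (by linarith)] at hle
    have hsin : 1 - c ^ 2 ≤ Real.arccos c ^ 2 := by
      rw [← Real.sq_sqrt (sub_nonneg.2 hc1), ← Real.sin_arccos]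
      exact pow_le_pow_left₀ (Real.sin_nonneg_of_nonneg_of_le_pi (Real.arccos_nonneg c)
        (Real.arccos_le_pi c)) (Real.sin_le (Real.arccos_nonneg c)) 2
    refine (integral_mono_of_nonneg (ae_of_all _ hnonneg) (hw.comp_measurable hT)
      (ae_of_all _ fun x ↦ ?_)).trans (hle.trans (by linarith))
    dsimp only [Function.comp]
    split_ifs with h₁ h₂ h₂
    · exact le_rfl
    · by_cases hu : ∑ j, α j * x j = 0
      · simp [hu]
      · rw [hβγ] at h₁
        exact absurd (abs_le_of_sign_ne hc2 hu h₁) h₂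
    · exact abs_nonneg _
    · exact le_rfl
  · have harc : 1 ≤ Real.arccos c := by
      have hcos : Real.arccos (Real.cos 1) = 1 :=
        Real.arccos_cos zero_le_one (by linarith [Real.pi_gt_three])
      rw [← hcos]
      exact Real.arccos_le_arccos (by linarith [Real.one_sub_sq_div_two_le_cos (x := 1)])
    have hfst : Integrable (fun p : ℝ × ℝ ↦ |p.1|)
        ((gaussianReal 0 1).prod (gaussianReal 0 (1 - c ^ 2).toNNReal)) :=
      ((IsGaussian.integrable_id (μ := gaussianReal 0 1)).comp_fst _).abs
    have hle := integral_abs_gaussianReal_le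
    have heq := integral_fun_fst (μ := gaussianReal 0 1)
      (ν := gaussianReal 0 (1 - c ^ 2).toNNReal) (fun u : ℝ ↦ |u|)
    rw [probReal_univ, one_smul] at heq
    rw [← heq] at hle
    rw [← hmap] at hfst hle
    rw [integral_map hT.aemeasurable hfst.aestronglyMeasurable] at hle
    refine (integral_mono_of_nonneg (ae_of_all _ hnonneg) (hfst.comp_measurable hT)
      (ae_of_all _ fun x ↦ ?_)).trans (hle.trans (by nlinarith))
    dsimp only [Function.comp]
    split_ifs
    exacts [le_rfl, abs_nonneg _]
end

section
/- Let α, β ∈ ℝ³ be unit vectors with angle φ = ∠(α,β) and αᵀβ ≥ 0. Then for x ∼ N(0, I₃), E[‖x‖² · 1{sign(αᵀx) ≠ sign(βᵀx)}] = O(φ): there is a universal constant C with E[‖x‖² 1{sign(αᵀx)≠sign(βᵀx)}] ≤ C φ. -/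
open MeasureTheory ProbabilityTheory Real
open scoped BigOperators Classical

theorem gaussianReal_real_Icc_neg_le {t : ℝ} (ht : 0 ≤ t) :
    (gaussianReal 0 1).real (Set.Icc (-t) t) ≤ 2 * t := by
  have hpdf (x : ℝ) : gaussianPDF 0 1 x ≤ 1 := by
    rw [gaussianPDF, ENNReal.ofReal_le_one, gaussianPDFReal]
    have hsqrt : (1 : ℝ) ≤ √(2 * π * (1 : NNReal)) := by
      rw [Real.one_le_sqrt]
      push_cast
      linarith [Real.pi_gt_three]
    refine mul_le_one₀ (inv_le_one_of_one_le₀ hsqrt) (Real.exp_nonneg _) ?_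
    rw [Real.exp_le_one_iff]
    exact div_nonpos_of_nonpos_of_nonneg (neg_nonpos.2 (sq_nonneg _)) (by positivity)
  refine ENNReal.toReal_le_of_le_ofReal (by positivity) ?_
  rw [gaussianReal_apply 0 one_ne_zero]
  calc ∫⁻ x in Set.Icc (-t) t, gaussianPDF 0 1 x
      ≤ ∫⁻ _ in Set.Icc (-t) t, 1 := lintegral_mono hpdf
    _ = ENNReal.ofReal (2 * t) := by
      rw [setLIntegral_one, Real.volume_Icc]
      ring_nf

instance isProbabilityMeasure_stdG (d : ℕ) : IsProbabilityMeasure (stdG d) := by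
  unfold stdG
  infer_instance

theorem integrable_abs_eval_pow_stdG {d : ℕ} (i : Fin d) (n : ℕ) :
    Integrable (fun x : Fin d → ℝ => |x i| ^ n) (stdG d) := by
  have h : Integrable (fun t : ℝ => |t| ^ n) (gaussianReal 0 1) := by
    simpa using (memLp_id_gaussianReal (μ := 0) (v := 1) n).integrable_norm_pow'
  exact integrable_comp_eval (μ := fun _ : Fin d => gaussianReal 0 1) h

theorem integrable_sum_sq_stdG (d : ℕ) :
    Integrable (fun x : Fin d → ℝ => ∑ j, x j ^ 2) (stdG d) := by
  refine integrable_finsetSum _ fun j _ => ?_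
  simpa using integrable_abs_eval_pow_stdG j 2

theorem integrable_sum_abs_pow_stdG (d n : ℕ) :
    Integrable (fun x : Fin d → ℝ => (∑ j, |x j|) ^ n) (stdG d) := by
  cases n with
  | zero => simp
  | succ n =>
    refine ((integrable_finsetSum Finset.univ fun j _ =>
      integrable_abs_eval_pow_stdG j (n + 1)).const_mul ((d : ℝ) ^ n)).mono'
      (Measurable.aestronglyMeasurable (by fun_prop)) (ae_of_all _ fun x => ?_)
    rw [Real.norm_of_nonneg (by positivity)]
    simpa using pow_sum_le_card_mul_sum_pow (s := Finset.univ) (f := fun j => |x j|)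
      (fun j _ => abs_nonneg _) n

/-- The orthogonal invariance of the standard Gaussian: a unit linear form can be rotated to the
first coordinate. -/
theorem exists_measurePreserving_stdG {d : ℕ} (α : Fin (d + 1) → ℝ) (hα : ∑ j, α j ^ 2 = 1) :
    ∃ T : (Fin (d + 1) → ℝ) → Fin (d + 1) → ℝ,
      MeasurePreserving T (stdG (d + 1)) (stdG (d + 1)) ∧
      (∀ x, ∑ j, α j * T x j = x 0) ∧ ∀ x, ∑ j, T x j ^ 2 = ∑ j, x j ^ 2 := by
  let v : Fin (d + 1) → EuclideanSpace ℝ (Fin (d + 1)) := fun _ => WithLp.toLp 2 α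
  have hv : Orthonormal ℝ (Set.domRestrict {0} v) := by
    refine ⟨fun i => ?_, fun i j hij => (hij (Subsingleton.elim i j)).elim⟩
    simp [v, EuclideanSpace.norm_eq, hα]
  obtain ⟨b, hb⟩ := hv.exists_orthonormalBasis_extension_of_card_eq (by simp)
  have hb0 : b 0 = WithLp.toLp 2 α := hb 0 rfl
  refine ⟨fun x => WithLp.ofLp (∑ i, x i • b i), ⟨by fun_prop, ?_⟩, fun x => ?_, fun x => ?_⟩
  · have h := (map_pi_eq_stdGaussian (ι := Fin (d + 1))).trans
      (stdGaussian_eq_map_pi_orthonormalBasis b)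
    have h' := congrArg (Measure.map (WithLp.ofLp (p := 2))) h
    rw [Measure.map_map (by fun_prop) (by fun_prop),
      Measure.map_map (by fun_prop) (by fun_prop)] at h'
    simpa [stdG, Function.comp_def] using h'.symm
  · have h : inner ℝ (b 0) (∑ i, x i • b i) = x 0 := b.orthonormal.inner_right_fintype x 0
    rw [hb0] at h
    rw [← h, PiLp.inner_apply]
    simp [mul_comm]
  · have h : ‖∑ i, x i • b i‖ ^ 2 = ∑ i, x i ^ 2 := by
      rw [← real_inner_self_eq_norm_sq, b.orthonormal.inner_sum]
      simp [sq]
    rw [← h, EuclideanSpace.real_norm_sq_eq]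

/-- A slab around a hyperplane whose width scales with the remaining coordinates carries little
Gaussian mass. -/
theorem integral_indicator_slab_stdG_le (d n : ℕ) {ε : ℝ} (hε : 0 ≤ ε) :
    ∫ x, {x : Fin (d + 1) → ℝ | |x 0| ≤ ε * ∑ j : Fin d, |x j.succ|}.indicator
        (fun x => (∑ j : Fin d, |x j.succ|) ^ n) x ∂(stdG (d + 1))
      ≤ 2 * ε * ∫ y, (∑ j, |y j|) ^ (n + 1) ∂(stdG d) := by
  let S : Set (ℝ × (Fin d → ℝ)) := {p | |p.1| ≤ ε * ∑ j, |p.2 j|}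
  let f : ℝ × (Fin d → ℝ) → ℝ := S.indicator fun p => (∑ j, |p.2 j|) ^ n
  have hS : MeasurableSet S := measurableSet_le (by fun_prop) (by fun_prop)
  have hmp : MeasurePreserving (MeasurableEquiv.piFinSuccAbove (fun _ : Fin (d + 1) => ℝ) 0)
      (stdG (d + 1)) ((gaussianReal 0 1).prod (stdG d)) :=
    measurePreserving_piFinSuccAbove (fun _ : Fin (d + 1) => gaussianReal 0 1) 0
  have hf : Integrable f ((gaussianReal 0 1).prod (stdG d)) :=
    ((integrable_sum_abs_pow_stdG d n).comp_snd (gaussianReal 0 1)).indicator hS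
  have hslice (y : Fin d → ℝ) :
      ∫ t, f (t, y) ∂(gaussianReal 0 1) ≤ 2 * ε * (∑ j, |y j|) ^ (n + 1) := by
    have hR : 0 ≤ ∑ j, |y j| := by positivity
    have heq : (fun t => f (t, y)) =
        (Set.Icc (-(ε * ∑ j, |y j|)) (ε * ∑ j, |y j|)).indicator
          fun _ => (∑ j, |y j|) ^ n := by
      ext t
      simp [f, S, Set.indicator_apply, abs_le]
    rw [heq, integral_indicator_const _ measurableSet_Icc, smul_eq_mul]
    calc _ ≤ 2 * (ε * ∑ j, |y j|) * (∑ j, |y j|) ^ n := by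
          gcongr
          exact gaussianReal_real_Icc_neg_le (by positivity)
      _ = _ := by ring
  calc _ = ∫ x, f (MeasurableEquiv.piFinSuccAbove (fun _ : Fin (d + 1) => ℝ) 0 x)
          ∂(stdG (d + 1)) := rfl
    _ = ∫ y, ∫ t, f (t, y) ∂(gaussianReal 0 1) ∂(stdG d) := by
      rw [hmp.integral_comp (MeasurableEquiv.measurableEmbedding _), integral_prod_symm _ hf]
    _ ≤ ∫ y, 2 * ε * (∑ j, |y j|) ^ (n + 1) ∂(stdG d) :=
      integral_mono hf.integral_prod_right
        ((integrable_sum_abs_pow_stdG d (n + 1)).const_mul _) hslice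
    _ = _ := integral_const_mul _ _

theorem mul_nonpos_of_sign_ne {a b : ℝ} (h : Real.sign a ≠ Real.sign b) : a * b ≤ 0 := by
  by_contra! hab
  rcases mul_pos_iff.1 hab with ⟨ha, hb⟩ | ⟨ha, hb⟩
  · exact h (by rw [Real.sign_of_pos ha, Real.sign_of_pos hb])
  · exact h (by rw [Real.sign_of_neg ha, Real.sign_of_neg hb])

theorem sq_sum_mul_le_of_sign_ne {ι : Type*} [Fintype ι] {α β x : ι → ℝ}
    (hα : ∑ j, α j ^ 2 = 1) (hβ : ∑ j, β j ^ 2 = 1) (hαβ : 0 ≤ ∑ j, α j * β j)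
    (h : Real.sign (∑ j, α j * x j) ≠ Real.sign (∑ j, β j * x j)) :
    (∑ j, α j * x j) ^ 2 ≤ Real.arccos (∑ j, α j * β j) ^ 2 * ∑ j, x j ^ 2 := by
  have hcs := Finset.sum_mul_sq_le_sq_mul_sq Finset.univ (fun j => α j - β j) x
  have hdist : ∑ j, (α j - β j) ^ 2 = 2 - 2 * ∑ j, α j * β j := by
    simp only [sub_sq, Finset.sum_add_distrib, Finset.sum_sub_distrib, hα, hβ, mul_assoc,
      ← Finset.mul_sum]
    ring
  have hle : ∑ j, α j * β j ≤ 1 := by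
    have : 0 ≤ ∑ j, (α j - β j) ^ 2 := by positivity
    linarith
  have hcos := Real.one_sub_sq_div_two_le_cos (x := Real.arccos (∑ j, α j * β j))
  rw [Real.cos_arccos (by linarith) hle] at hcos
  have hsub : ∑ j, (α j - β j) * x j = ∑ j, α j * x j - ∑ j, β j * x j := by
    simp only [sub_mul, Finset.sum_sub_distrib]
  rw [hsub, hdist] at hcs
  calc (∑ j, α j * x j) ^ 2 ≤ (∑ j, α j * x j - ∑ j, β j * x j) ^ 2 := by
        nlinarith [mul_nonpos_of_sign_ne h, sq_nonneg (∑ j, β j * x j)]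
    _ ≤ _ := hcs
    _ ≤ _ := by
      gcongr
      linarith

/-- The cone around a hyperplane of slope `ε` carries second moment `O(ε)`. -/
theorem integral_indicator_cone_stdG_le (d : ℕ) {ε : ℝ} (hε : 0 ≤ ε) :
    ∫ x, {x : Fin (d + 1) → ℝ | x 0 ^ 2 ≤ ε ^ 2 * ∑ j, x j ^ 2}.indicator
        (fun x => ∑ j, x j ^ 2) x ∂(stdG (d + 1))
      ≤ (2 * ∫ x, ∑ j, x j ^ 2 ∂(stdG (d + 1)) + 8 * ∫ y, (∑ j, |y j|) ^ 3 ∂(stdG d)) * ε := by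
  have hM : 0 ≤ ∫ x, ∑ j, x j ^ 2 ∂(stdG (d + 1)) := integral_nonneg fun x => by positivity
  have hK : 0 ≤ ∫ y, (∑ j, |y j|) ^ 3 ∂(stdG d) := integral_nonneg fun y => by positivity
  have hnonneg (s : Set (Fin (d + 1) → ℝ)) (x : Fin (d + 1) → ℝ) :
      0 ≤ s.indicator (fun x => ∑ j, x j ^ 2) x :=
    Set.indicator_nonneg (fun x _ => by positivity) x
  rcases le_total (1 / 2) ε with hhalf | hhalf
  · calc _ ≤ ∫ x, ∑ j, x j ^ 2 ∂(stdG (d + 1)) :=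
          integral_mono_of_nonneg (ae_of_all _ (hnonneg _)) (integrable_sum_sq_stdG _)
            (ae_of_all _ fun x => Set.indicator_le_self' (fun x _ => by positivity) x)
      _ ≤ _ := by nlinarith [mul_nonneg hK hε]
  · let S : Set (Fin (d + 1) → ℝ) := {x | |x 0| ≤ 2 * ε * ∑ j : Fin d, |x j.succ|}
    have hS : MeasurableSet S := measurableSet_le (by fun_prop) (by fun_prop)
    have hint : Integrable (S.indicator fun x => (∑ j : Fin d, |x j.succ|) ^ 2)
        (stdG (d + 1)) := by
      refine ((integrable_sum_abs_pow_stdG (d + 1) 2).mono'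
        (Measurable.aestronglyMeasurable (by fun_prop))
        (ae_of_all _ fun x => ?_)).indicator hS
      rw [Real.norm_of_nonneg (by positivity), Fin.sum_univ_succ (fun j => |x j|)]
      gcongr
      linarith [abs_nonneg (x 0)]
    have hle (x : Fin (d + 1) → ℝ) :
        {x : Fin (d + 1) → ℝ | x 0 ^ 2 ≤ ε ^ 2 * ∑ j, x j ^ 2}.indicator
            (fun x => ∑ j, x j ^ 2) x
          ≤ 2 * S.indicator (fun x => (∑ j : Fin d, |x j.succ|) ^ 2) x := by
      by_cases hx : x 0 ^ 2 ≤ ε ^ 2 * ∑ j, x j ^ 2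
      · have hR : 0 ≤ ∑ j : Fin d, |x j.succ| := by positivity
        have hsq : ∑ j : Fin d, x j.succ ^ 2 ≤ (∑ j : Fin d, |x j.succ|) ^ 2 := by
          simpa using Finset.sum_sq_le_sq_sum_of_nonneg (s := Finset.univ)
            (f := fun j : Fin d => |x j.succ|) fun j _ => abs_nonneg _
        have hε2 : ε ^ 2 ≤ 1 / 4 := by nlinarith
        rw [Fin.sum_univ_succ] at hx
        have h0 : x 0 ^ 2 ≤ (2 * ε * ∑ j : Fin d, |x j.succ|) ^ 2 := by
          have h1 : ε ^ 2 * x 0 ^ 2 ≤ 1 / 4 * x 0 ^ 2 := by gcongr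
          have h2 : ε ^ 2 * ∑ j : Fin d, x j.succ ^ 2
              ≤ ε ^ 2 * (∑ j : Fin d, |x j.succ|) ^ 2 := by gcongr
          nlinarith [sq_nonneg (ε * ∑ j : Fin d, |x j.succ|)]
        have hxS : x ∈ S := abs_le_of_sq_le_sq h0 (by positivity)
        rw [Set.indicator_of_mem hxS]
        refine (Set.indicator_le_self' (fun x _ => by positivity) x).trans ?_
        rw [Fin.sum_univ_succ]
        have h3 : ε ^ 2 * (∑ j : Fin d, |x j.succ|) ^ 2
            ≤ 1 / 4 * (∑ j : Fin d, |x j.succ|) ^ 2 := by gcongr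
        nlinarith
      · rw [Set.indicator_of_notMem (by exact hx)]
        exact mul_nonneg zero_le_two (Set.indicator_nonneg (fun x _ => by positivity) x)
    calc _ ≤ ∫ x, 2 * S.indicator (fun x => (∑ j : Fin d, |x j.succ|) ^ 2) x
            ∂(stdG (d + 1)) :=
          integral_mono_of_nonneg (ae_of_all _ (hnonneg _)) (hint.const_mul 2) (ae_of_all _ hle)
      _ ≤ 2 * (2 * (2 * ε) * ∫ y, (∑ j, |y j|) ^ 3 ∂(stdG d)) := by
        rw [integral_const_mul]
        gcongr
        exact integral_indicator_slab_stdG_le d 2 (by positivity)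
      _ ≤ _ := by nlinarith [mul_nonneg hM hε]

theorem stmt10 : ∃ C : ℝ, 0 < C ∧ ∀ (α β : Fin 3 → ℝ),
    (∑ j, α j ^ 2) = 1 → (∑ j, β j ^ 2) = 1 → 0 ≤ ∑ j, α j * β j →
    (∫ x, (if Real.sign (∑ j, α j * x j) ≠ Real.sign (∑ j, β j * x j)
            then (∑ j, x j ^ 2) else 0) ∂(stdG 3))
      ≤ C * Real.arccos (∑ j, α j * β j) := by
  have hM : 0 ≤ ∫ x, ∑ j, x j ^ 2 ∂(stdG 3) := integral_nonneg fun x => by positivity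
  have hK : 0 ≤ ∫ y, (∑ j, |y j|) ^ 3 ∂(stdG 2) := integral_nonneg fun y => by positivity
  refine ⟨2 * ∫ x, ∑ j, x j ^ 2 ∂(stdG 3) + 8 * ∫ y, (∑ j, |y j|) ^ 3 ∂(stdG 2) + 1,
    by positivity, fun α β hα hβ hαβ => ?_⟩
  obtain ⟨T, hT, hT0, hTsq⟩ := exists_measurePreserving_stdG α hα
  set φ := Real.arccos (∑ j, α j * β j)
  have hφ0 : 0 ≤ φ := Real.arccos_nonneg _
  let S : Set (Fin 3 → ℝ) := {x | (∑ j, α j * x j) ^ 2 ≤ φ ^ 2 * ∑ j, x j ^ 2}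
  have hS : MeasurableSet S := measurableSet_le (by fun_prop) (by fun_prop)
  have hint : Integrable (S.indicator fun x => ∑ j, x j ^ 2) (stdG 3) :=
    (integrable_sum_sq_stdG 3).indicator hS
  calc _ ≤ ∫ x, S.indicator (fun x => ∑ j, x j ^ 2) x ∂(stdG 3) := by
        refine integral_mono_of_nonneg (ae_of_all _ fun x => ?_) hint (ae_of_all _ fun x => ?_)
        · dsimp only [Pi.zero_apply]
          split_ifs <;> positivity
        · dsimp only
          split_ifs with h
          · have hx : x ∈ S := sq_sum_mul_le_of_sign_ne hα hβ hαβ h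
            rw [Set.indicator_of_mem hx]
          · exact Set.indicator_nonneg (fun x _ => by positivity) x
    _ = ∫ x, S.indicator (fun x => ∑ j, x j ^ 2) (T x) ∂(stdG 3) := by
        rw [← integral_map hT.measurable.aemeasurable (by rw [hT.map_eq]; exact hint.1), hT.map_eq]
    _ = ∫ x, {x : Fin 3 → ℝ | x 0 ^ 2 ≤ φ ^ 2 * ∑ j, x j ^ 2}.indicator
          (fun x => ∑ j, x j ^ 2) x ∂(stdG 3) := by
        simp only [S, Set.indicator_apply, Set.mem_ofPred_eq, hT0, hTsq]
    _ ≤ _ := integral_indicator_cone_stdG_le 2 hφ0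
    _ ≤ _ := mul_le_mul_of_nonneg_right (by linarith) hφ0
end

section
/- Let α, β ∈ ℝ⁴ be unit vectors with angle φ = ∠(α,β) ∈ (0, π), and let x ∼ N(0, I₄). Then for any 0 < δ₁, δ₂ ≤ φ, E[‖x‖² · 1{|αᵀx| ≤ δ₁‖x‖, |βᵀx| ≤ δ₂‖x‖}] = O(δ₁δ₂ / sin φ). -/
open MeasureTheory ProbabilityTheory Real
open scoped BigOperators Classical

/-- The standard Gaussian measure has the product density with respect to Lebesgue measure. -/
lemma stdG_eq_withDensity (d : ℕ) :
    stdG d = volume.withDensity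
      (fun x => ENNReal.ofReal (∏ i, gaussianPDFReal 0 1 (x i))) := by
  refine Measure.pi_eq fun s hs => ?_
  rw [withDensity_apply _ (MeasurableSet.univ_pi hs), volume_pi, Measure.restrict_pi_pi,
    ← ofReal_integral_eq_lintegral_ofReal
      (Integrable.fintype_prod fun i => (integrable_gaussianPDFReal 0 1).restrict)
      (ae_of_all _ fun x => Finset.prod_nonneg fun i _ => gaussianPDFReal_nonneg _ _ _),
    integral_fintype_prod_eq_prod (fun _ => gaussianPDFReal 0 1),
    ENNReal.ofReal_prod_of_nonneg fun i _ =>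
      integral_nonneg fun x => gaussianPDFReal_nonneg _ _ _]
  exact Finset.prod_congr rfl fun i _ =>
    (gaussianReal_apply_eq_integral 0 one_ne_zero (s i)).symm

/-- Integration against the standard Gaussian measure as a weighted Lebesgue integral. -/
lemma integral_stdG_s11 (d : ℕ) (f : (Fin d → ℝ) → ℝ) :
    ∫ x, f x ∂(stdG d) = ∫ x, (∏ i, gaussianPDFReal 0 1 (x i)) * f x := by
  rw [stdG_eq_withDensity, integral_withDensity_eq_integral_toReal_smul]
  · refine integral_congr_ae (ae_of_all _ fun x => ?_)
    simp only [smul_eq_mul]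
    rw [ENNReal.toReal_ofReal (Finset.prod_nonneg fun i _ => gaussianPDFReal_nonneg _ _ _)]
  · exact (Finset.measurable_prod _ fun i _ =>
      (measurable_gaussianPDFReal 0 1).comp (measurable_pi_apply i)).ennreal_ofReal
  · exact ae_of_all _ fun x => ENNReal.ofReal_lt_top

lemma prod_gaussianPDFReal_le (d : ℕ) (x : Fin d → ℝ) :
    ∏ i, gaussianPDFReal 0 1 (x i) ≤ exp (-(∑ i, x i ^ 2) / 2) := by
  have h : exp (-(∑ i, x i ^ 2) / 2) = ∏ i, exp (-(x i ^ 2) / 2) := by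
    rw [← Real.exp_sum, ← Finset.sum_div, Finset.sum_neg_distrib]
  rw [h]
  refine Finset.prod_le_prod (fun i _ => gaussianPDFReal_nonneg _ _ _) fun i _ => ?_
  have h1 : (1 : ℝ) ≤ √(2 * π) := by
    rw [Real.one_le_sqrt]
    linarith [Real.pi_gt_three]
  simpa [gaussianPDFReal] using
    mul_le_of_le_one_left (exp_pos (-(x i ^ 2) / 2)).le (inv_le_one_of_one_le₀ h1)

lemma mul_one_add_pow_mul_exp_le {s : ℝ} (hs : 0 ≤ s) :
    s * (1 + s) ^ 4 * exp (-s / 2) ≤ 7680 := by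
  have h1 := Real.pow_div_factorial_le_exp (x := (1 + s) / 2) (by linarith) 5
  have h2 : exp ((1 + s) / 2) = exp (1 / 2) * exp (s / 2) := by
    rw [← Real.exp_add]; ring_nf
  have h3 : exp (1 / 2) ≤ 2 := by
    have h : exp (1 / 2) * exp (1 / 2) = exp 1 := by rw [← Real.exp_add]; norm_num
    nlinarith [Real.exp_one_lt_d9, Real.exp_pos (1 / 2)]
  have h4 : exp (-s / 2) * exp (s / 2) = 1 := by rw [← Real.exp_add]; ring_nf; simp
  have h5 : s * (1 + s) ^ 4 ≤ (1 + s) ^ 5 := by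
    rw [pow_succ' _ 4]; gcongr; linarith
  have h6 : (1 + s) ^ 5 ≤ 7680 * exp (s / 2) := by
    have h7 : (((1 + s) / 2) ^ 5 / (Nat.factorial 5 : ℝ)) = (1 + s) ^ 5 / 3840 := by
      norm_num [Nat.factorial]; ring
    rw [h7, h2] at h1
    have := mul_le_mul_of_nonneg_right h3 (exp_pos (s / 2)).le
    linarith
  calc s * (1 + s) ^ 4 * exp (-s / 2) ≤ 7680 * exp (s / 2) * exp (-s / 2) := by
        exact mul_le_mul_of_nonneg_right (h5.trans h6) (exp_pos _).le
    _ = 7680 := by rw [mul_assoc, mul_comm (exp (s / 2)), h4, mul_one]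

lemma integrable_prod_inv_one_add_div_sq {n : ℕ} {c : Fin n → ℝ} (hc : ∀ i, 0 < c i) :
    Integrable fun y : Fin n → ℝ => ∏ i, (1 + (y i / c i) ^ 2)⁻¹ :=
  Integrable.fintype_prod (f := fun i t => (1 + (t / c i) ^ 2)⁻¹)
    fun i => integrable_inv_one_add_sq.comp_div (hc i).ne'

lemma integral_prod_inv_one_add_div_sq {n : ℕ} {c : Fin n → ℝ} (hc : ∀ i, 0 < c i) :
    ∫ y : Fin n → ℝ, ∏ i, (1 + (y i / c i) ^ 2)⁻¹ = (∏ i, c i) * π ^ n := by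
  rw [integral_fintype_prod_volume_eq_prod (fun i (t : ℝ) => (1 + (t / c i) ^ 2)⁻¹)]
  have h (i : Fin n) : ∫ t : ℝ, (1 + (t / c i) ^ 2)⁻¹ = c i * π := by
    rw [Measure.integral_comp_div (g := fun t : ℝ => (1 + t ^ 2)⁻¹),
      integral_univ_inv_one_add_sq, abs_of_pos (hc i), smul_eq_mul]
  simp [h, Finset.prod_mul_distrib]

/-- Second moment of a standard Gaussian vector on the cone where the coordinates of `M x` are
bounded by prescribed multiples of `‖x‖`. -/
lemma integral_stdG_cone_le {M : Matrix (Fin 4) (Fin 4) ℝ} (hM : M.det ≠ 0) {c : Fin 4 → ℝ}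
    (hc : ∀ i, 0 < c i) {p : (Fin 4 → ℝ) → Prop} [DecidablePred p]
    (hp : ∀ x, p x → ∀ i, |M.mulVec x i| ≤ c i * √(∑ j, x j ^ 2)) :
    ∫ x, (if p x then ∑ j, x j ^ 2 else 0) ∂(stdG 4) ≤
      7680 * π ^ 4 * (∏ i, c i) / |M.det| := by
  set g : (Fin 4 → ℝ) → ℝ := fun y => ∏ i, (1 + (y i / c i) ^ 2)⁻¹ with hg
  have hmap := Real.map_matrix_volume_pi_eq_smul_volume_pi hM
  have hmeas : Measurable (Matrix.toLin' M) :=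
    (LinearMap.continuous_of_finiteDimensional _).measurable
  have hgi : Integrable g (Measure.map (Matrix.toLin' M) volume) := by
    rw [hmap]
    exact (integrable_prod_inv_one_add_div_sq hc).smul_measure ENNReal.ofReal_ne_top
  have hgM : Integrable fun x => g (Matrix.toLin' M x) := hgi.comp_measurable hmeas
  have hint : ∫ x, g (Matrix.toLin' M x) = |M.det|⁻¹ * ((∏ i, c i) * π ^ 4) := by
    rw [← integral_map hmeas.aemeasurable hgi.aestronglyMeasurable, hmap, integral_smul_measure,
      integral_prod_inv_one_add_div_sq hc, ENNReal.toReal_ofReal (abs_nonneg _), abs_inv,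
      smul_eq_mul]
  have hg0 (y) : 0 ≤ g y := Finset.prod_nonneg fun i _ => by positivity
  have hd (x : Fin 4 → ℝ) : 0 ≤ ∏ i, gaussianPDFReal 0 1 (x i) :=
    Finset.prod_nonneg fun i _ => gaussianPDFReal_nonneg _ _ _
  rw [integral_stdG_s11]
  calc _ ≤ ∫ x, 7680 * g (Matrix.toLin' M x) := by
        refine integral_mono_of_nonneg (ae_of_all _ fun x => ?_) (hgM.const_mul _)
          (ae_of_all _ fun x => ?_)
        · refine mul_nonneg (hd x) ?_
          split_ifs
          · positivity
          · exact le_rfl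
        · dsimp only
          split_ifs with h
          · set s := ∑ j, x j ^ 2 with hs
            have hs0 : 0 ≤ s := by positivity
            have hlow : ((1 + s) ^ 4)⁻¹ ≤ g (Matrix.toLin' M x) := by
              calc ((1 + s) ^ 4)⁻¹ = ∏ _i : Fin 4, (1 + s)⁻¹ := by simp
                _ ≤ g (Matrix.toLin' M x) := by
                    refine Finset.prod_le_prod (fun i _ => by positivity) fun i _ => ?_
                    refine inv_anti₀ (by positivity) ?_
                    have h1 : |M.mulVec x i / c i| ≤ √s := by
                      rw [abs_div, abs_of_pos (hc i), div_le_iff₀ (hc i), mul_comm]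
                      exact hp x h i
                    have h2 := pow_le_pow_left₀ (abs_nonneg _) h1 2
                    rw [sq_abs, Real.sq_sqrt hs0] at h2
                    simpa using h2
            calc (∏ i, gaussianPDFReal 0 1 (x i)) * s
                ≤ exp (-s / 2) * s := by gcongr; exact prod_gaussianPDFReal_le 4 x
              _ = s * (1 + s) ^ 4 * exp (-s / 2) * ((1 + s) ^ 4)⁻¹ := by
                  field_simp
              _ ≤ 7680 * g (Matrix.toLin' M x) := by
                  gcongr
                  exact mul_one_add_pow_mul_exp_le hs0
          · rw [mul_zero]
            exact mul_nonneg (by norm_num) (hg0 _)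
    _ = 7680 * π ^ 4 * (∏ i, c i) / |M.det| := by
        rw [integral_const_mul, hint]
        ring

/-- Some `2 × 2` minor of a pair of unit vectors is comparable to the sine of their angle. -/
lemma exists_sq_minor_ge {α β : Fin 4 → ℝ} (hα : ∑ j, α j ^ 2 = 1) (hβ : ∑ j, β j ^ 2 = 1) :
    ∃ i j, 1 - (∑ k, α k * β k) ^ 2 ≤ 9 * (α i * β j - α j * β i) ^ 2 := by
  by_contra! h
  have hL : ∑ i, ∑ j, (α i * β j - α j * β i) ^ 2 =
      2 * ((∑ j, α j ^ 2) * (∑ j, β j ^ 2) - (∑ k, α k * β k) ^ 2) := by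
    simp only [Fin.sum_univ_four]; ring
  rw [hα, hβ] at hL
  have h0 := (by positivity : (0 : ℝ) ≤ 9 * (α 0 * β 0 - α 0 * β 0) ^ 2).trans_lt (h 0 0)
  have hsum : ∑ i, ∑ j, 9 * (α i * β j - α j * β i) ^ 2 <
      ∑ _i : Fin 4, ∑ _j : Fin 4, (1 - (∑ k, α k * β k) ^ 2) :=
    Finset.sum_lt_sum_of_nonempty Finset.univ_nonempty fun i _ =>
      Finset.sum_lt_sum_of_nonempty Finset.univ_nonempty fun j _ => h i j
  simp only [← Finset.mul_sum, hL] at hsum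
  norm_num at hsum
  linarith

lemma det_updateRow_updateRow_one {i j : Fin 4} (hij : i ≠ j) (α β : Fin 4 → ℝ) :
    (((1 : Matrix (Fin 4) (Fin 4) ℝ).updateRow i α).updateRow j β).det =
      α i * β j - α j * β i := by
  fin_cases i <;> fin_cases j <;> first | exact absurd rfl hij | skip
  all_goals
    simp [Matrix.det_succ_row_zero, Fin.sum_univ_succ, Matrix.updateRow_apply, Fin.succAbove,
      Matrix.one_apply]
  all_goals ring

theorem stmt11 : ∃ C : ℝ, 0 < C ∧ ∀ (α β : Fin 4 → ℝ),
    (∑ j, α j ^ 2) = 1 → (∑ j, β j ^ 2) = 1 →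
    ∀ δ₁ δ₂ : ℝ, 0 < δ₁ → 0 < δ₂ →
    δ₁ ≤ Real.arccos (∑ j, α j * β j) → δ₂ ≤ Real.arccos (∑ j, α j * β j) →
    Real.arccos (∑ j, α j * β j) < π →
    (∫ x, (if |∑ j, α j * x j| ≤ δ₁ * Real.sqrt (∑ j, x j ^ 2) ∧
              |∑ j, β j * x j| ≤ δ₂ * Real.sqrt (∑ j, x j ^ 2)
            then (∑ j, x j ^ 2) else 0) ∂(stdG 4))
      ≤ C * δ₁ * δ₂ / Real.sin (Real.arccos (∑ j, α j * β j)) := by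
  refine ⟨3 * (7680 * π ^ 4), by positivity, ?_⟩
  intro α β hα hβ δ₁ δ₂ h₁ h₂ hδ₁ _ hπ
  have hsin := Real.sin_pos_of_pos_of_lt_pi (h₁.trans_le hδ₁) hπ
  obtain ⟨i, j, hmin⟩ := exists_sq_minor_ge hα hβ
  rw [Real.sin_arccos] at hsin ⊢
  set S := √(1 - (∑ k, α k * β k) ^ 2) with hS
  have hle : S ≤ 3 * |α i * β j - α j * β i| := by
    refine Real.sqrt_le_iff.2 ⟨by positivity, ?_⟩
    rw [mul_pow, sq_abs]
    linarith
  have hij : i ≠ j := by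
    rintro rfl
    simp at hle
    linarith
  have hdet := det_updateRow_updateRow_one hij α β
  have habs : 0 < |α i * β j - α j * β i| := by linarith
  set M := ((1 : Matrix (Fin 4) (Fin 4) ℝ).updateRow i α).updateRow j β with hMdef
  set c : Fin 4 → ℝ := Function.update (Function.update (fun _ => 1) i δ₁) j δ₂ with hc
  have hprod : ∏ k, c k = δ₁ * δ₂ := by
    rw [hc, Finset.prod_update_of_mem (Finset.mem_univ j),
      Finset.prod_update_of_mem (by simpa using hij)]
    simp [mul_comm]
  have hcpos (k) : 0 < c k := by
    simp only [hc, Function.update_apply]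
    split_ifs <;> first | assumption | norm_num
  have key := integral_stdG_cone_le (M := M) (by rw [hdet]; exact abs_pos.1 habs) hcpos
    (p := fun x => |∑ j, α j * x j| ≤ δ₁ * √(∑ j, x j ^ 2) ∧
      |∑ j, β j * x j| ≤ δ₂ * √(∑ j, x j ^ 2)) (by
    rintro x ⟨hx₁, hx₂⟩ k
    by_cases hkj : k = j
    · subst hkj
      simpa [hMdef, hc, Matrix.mulVec, dotProduct] using hx₂
    by_cases hki : k = i
    · subst hki
      simpa [hMdef, hc, Matrix.mulVec, dotProduct, Matrix.updateRow_ne hkj, hkj] using hx₁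
    · have hk : M.mulVec x k = x k := by
        simp [hMdef, Matrix.mulVec, dotProduct, Matrix.updateRow_apply, hkj, hki,
          Matrix.one_apply]
      rw [hk, hc, Function.update_of_ne hkj, Function.update_of_ne hki, one_mul]
      exact Real.abs_le_sqrt
        (Finset.single_le_sum (f := fun l => x l ^ 2) (fun l _ => sq_nonneg _)
          (Finset.mem_univ k)))
  refine key.trans ?_
  rw [hprod, hdet, div_le_div_iff₀ habs hsin]
  calc 7680 * π ^ 4 * (δ₁ * δ₂) * S
      ≤ 7680 * π ^ 4 * (δ₁ * δ₂) * (3 * |α i * β j - α j * β i|) := by gcongr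
    _ = 3 * (7680 * π ^ 4) * δ₁ * δ₂ * |α i * β j - α j * β i| := by ring
end
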